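/- Fix n ≥ 1. Let Q denote the partially ordered set of those nonempty finite subsets of Fin (n+1) that are not equal to the singleton {n} (i.e. {S : Finset (Fin (n+1)) // S.Nonempty ∧ S ≠ {Fin.last n}}), ordered by inclusion and regarded as a category, and let P[n−1] denote the poset category of nonempty finite subsets of Fin n. Then the functor P[n−1] ⥤ Q induced by the inclusion S ↦ S.map Fin.castSucc (viewing a subset of {0,…,n−1} as a subset of {0,…,n}) is an initial functor (CategoryTheory.Functor.Initial); indeed for every S in Q the category of nonempty T ⊆ Fin n with castSucc-image contained in S has a terminal object, namely S with the element n removed. -/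

import Mathlib

open CategoryTheory

/-- The poset of nonempty finite subsets of `Fin m`, ordered by inclusion,
regarded as a category. -/
abbrev NonemptySubsetPoset (m : ℕ) := {S : Finset (Fin m) // S.Nonempty}

/-- The poset of nonempty finite subsets of `Fin (n+1)` other than the
singleton `{n}`, ordered by inclusion, regarded as a category. -/
abbrev NotSingletonTopPoset (n : ℕ) :=
  {S : Finset (Fin (n + 1)) // S.Nonempty ∧ S ≠ {Fin.last n}}

/-- The inclusion `P_ν[n-1] → P_{≠n}`, viewing a subset of `{0,…,n-1}` as a
subset of `{0,…,n}` via `Fin.castSucc`. -/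
def inclMap (n : ℕ) : NonemptySubsetPoset n → NotSingletonTopPoset n :=
  fun S =>
    ⟨S.1.map Fin.castSuccEmb, S.2.map, by
      intro hEq
      obtain ⟨a, ha⟩ := S.2
      have hmem : Fin.castSucc a ∈ S.1.map Fin.castSuccEmb :=
        Finset.mem_map_of_mem _ ha
      rw [hEq, Finset.mem_singleton] at hmem
      exact absurd hmem (Fin.castSucc_lt_last a).ne⟩

theorem inclMap_monotone (n : ℕ) : Monotone (inclMap n) :=
  fun _ _ h => Finset.map_subset_map.mpr h

/-- The inclusion functor `P_ν[n-1] ⥤ P_{≠n}`. -/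
def inclFunctor (n : ℕ) :
    NonemptySubsetPoset n ⥤ NotSingletonTopPoset n :=
  (inclMap_monotone n).functor

/-! Deleting `n` is right adjoint to the inclusion: `T ⊆ {0,…,n-1}` lies in `S` exactly when it lies
in `S \ {n}`, which is nonempty because `S` is neither empty nor `{n}`. A left adjoint is initial,
and the counit at `S` is terminal among the arrows from the inclusion to `S`. -/

theorem finset_map_preimage_eq_erase {α β : Type*} [DecidableEq β] {f : α ↪ β} {b : β}
    (hf : Set.range f = {b}ᶜ) (s : Finset β) :
    (s.preimage f f.injective.injOn).map f = s.erase b := by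
  classical
  rw [Finset.map_eq_image, Finset.image_preimage, hf]
  simp only [Set.mem_compl_iff, Set.mem_singleton_iff, Finset.filter_ne']

theorem finset_erase_nonempty_of_ne_singleton {α : Type*} [DecidableEq α] {s : Finset α} {a : α}
    (hs : s.Nonempty) (hne : s ≠ {a}) : (s.erase a).Nonempty := by
  rw [Finset.nonempty_iff_ne_empty, ne_eq, Finset.erase_eq_empty_iff, not_or]
  exact ⟨hs.ne_empty, hne⟩

theorem range_castSuccEmb (n : ℕ) : Set.range (Fin.castSuccEmb (n := n)) = {Fin.last n}ᶜ := by
  ext i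
  exact Fin.exists_castSucc_eq

theorem map_castSuccEmb_preimage {n : ℕ} (S : Finset (Fin (n + 1))) :
    (S.preimage Fin.castSuccEmb Fin.castSuccEmb.injective.injOn).map Fin.castSuccEmb =
      S.erase (Fin.last n) :=
  finset_map_preimage_eq_erase (range_castSuccEmb n) S

/-- The deletion map `P_{≠n} → P_ν[n-1]`, `S ↦ S \ {n}`, right adjoint to `inclMap`. It is encoded
as the preimage under `Fin.castSuccEmb`, so that the result consists of elements of `Fin n`. -/
noncomputable def eraseLastMap (n : ℕ) (S : NotSingletonTopPoset n) : NonemptySubsetPoset n :=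
  ⟨S.1.preimage Fin.castSuccEmb Fin.castSuccEmb.injective.injOn, by
    rw [← Finset.map_nonempty (f := Fin.castSuccEmb), map_castSuccEmb_preimage]
    exact finset_erase_nonempty_of_ne_singleton S.2.1 S.2.2⟩

theorem gc_inclMap_eraseLastMap (n : ℕ) : GaloisConnection (inclMap n) (eraseLastMap n) :=
  fun _ _ => Finset.map_subset_iff_subset_preimage

/-- The deletion functor `P_{≠n} ⥤ P_ν[n-1]`, right adjoint to `inclFunctor`. -/
noncomputable def eraseLastFunctor (n : ℕ) : NotSingletonTopPoset n ⥤ NonemptySubsetPoset n :=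
  (gc_inclMap_eraseLastMap n).monotone_u.functor

/-- The adjunction between inclusion and deletion, whose counit at `S` is `S \ {n} ⊆ S`. -/
noncomputable def inclFunctorAdjunction (n : ℕ) : inclFunctor n ⊣ eraseLastFunctor n :=
  (gc_inclMap_eraseLastMap n).adjunction

/-- The inclusion `P_ν[n-1] ↪ P_{≠n}` is left cofinal (initial); indeed for
every `S` in `P_{≠n}` the costructured arrow category has a terminal object,
namely `S` with the element `n` removed. -/
theorem inclFunctor_initial (n : ℕ) (hn : 1 ≤ n) :
    (inclFunctor n).Initial ∧
      ∀ S : NotSingletonTopPoset n,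
        ∃ T : CostructuredArrow (inclFunctor n) S,
          T.left.1.map Fin.castSuccEmb = S.1.erase (Fin.last n) ∧
          Nonempty (Limits.IsTerminal T) := by
  let adj := inclFunctorAdjunction n
  refine ⟨Functor.initial_of_adjunction adj, fun S => ?_⟩
  exact ⟨CostructuredArrow.mk (adj.counit.app S), map_castSuccEmb_preimage S.1,
    ⟨mkTerminalOfRightAdjoint _ adj S⟩⟩
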